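/- Consider the one-dimensional model $Y\mid\beta \sim N(\beta,1)$ with prior $\nu(\beta \mid \lambda, \alpha) = \frac{\alpha\lambda^{1/\alpha}}{2^{1/\alpha+1}\Gamma(1/\alpha)} e^{-\frac{\lambda}{2}|\beta|^{\alpha}}$, $\lambda \sim \mathrm{Gamma}(e, f)$ (shape-rate), and $\alpha \sim \mathrm{Unif}(k_1, k_2)$ with $0 < k_1 \le 1 \le 2 \le k_2 \le 4$. Let $m(y)$ be the marginal density of $Y$. Then $\lim_{|y|\to\infty} \frac{d}{dy}\log m(y) = 0$, and consequently the posterior mean satisfies $|y - \mathbb{E}(\beta\mid y)| \to 0$ as $|y|\to\infty$. -/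

import Mathlib

/-!
The prior `q` of `β` is positive, nonincreasing in `|β|`, and decays at most polynomially. Hence
`q (y + u) / q y → 1` as `|y| → ∞`, and this ratio is at most a constant times `(1 + |u|) ^ N`. By
dominated convergence against the Gaussian noise, the posterior mean of `u = β - y` tends to the
mean of the noise, which is `0`.

For fixed `α` the tail of the prior has order `|β| ^ (-(α * e + 1))`, so one exponent `N` serves
the whole mixture over `α`; comparing `q` at points whose moduli differ by a bounded factor gives a
condition that survives the mixing. Since the marginal is `exp (-y² / 2)` times a moment generating
function, it is differentiable, and its logarithmic derivative is `E(β ∣ y) - y`.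
-/

open MeasureTheory Filter

open ProbabilityTheory Bornology Topology Set
open scoped NNReal

lemma integral_pos_of_ae_pos {A : Type*} [MeasurableSpace A] {ρ : Measure A} [NeZero ρ]
    {g : A → ℝ} (hint : Integrable g ρ) (hpos : ∀ᵐ x ∂ρ, 0 < g x) : 0 < ∫ x, g x ∂ρ := by
  refine (integral_pos_iff_support_of_nonneg_ae (hpos.mono fun _ h => h.le) hint).2 ?_
  have hsupp : Function.support g =ᵐ[ρ] univ := eventuallyEq_univ.2 (hpos.mono fun _ h => h.ne')
  rw [measure_congr hsupp]
  exact NeZero.pos _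

lemma isProbabilityMeasure_cond_Ioc {a b : ℝ} (h : a < b) :
    IsProbabilityMeasure (volume[|Ioc a b] : Measure ℝ) :=
  cond_isProbabilityMeasure_of_finite (by simpa using h) (by simp)

lemma integral_cond_Ioc {a b : ℝ} (h : a ≤ b) (g : ℝ → ℝ) :
    ∫ x, g x ∂volume[|Ioc a b] = 1 / (b - a) * ∫ x in a..b, g x := by
  rw [ProbabilityTheory.cond, integral_smul_measure, Real.volume_Ioc, ENNReal.toReal_inv,
    ENNReal.toReal_ofReal (sub_nonneg.2 h), intervalIntegral.integral_of_le h, smul_eq_mul,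
    one_div]

/-- `q` is positive and nonincreasing in `|x|`, falling off no faster than `|x| ^ (-N)`. The
condition compares `q` at points whose moduli differ by at most a factor `s`; in this form it passes
to mixtures, and `s = 1` gives evenness and monotonicity. -/
structure HasPowerTail (N : ℕ) (q : ℝ → ℝ) : Prop where
  pos : ∀ x, 0 < q x
  le_pow_mul : ∀ ⦃s y z : ℝ⦄, 1 ≤ s → |y| ≤ s * |z| → q z ≤ s ^ N * q y

namespace HasPowerTail

variable {N : ℕ} {q : ℝ → ℝ}

lemma apply_le_of_abs_le (hq : HasPowerTail N q) {y z : ℝ} (h : |y| ≤ |z|) : q z ≤ q y := by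
  simpa using hq.le_pow_mul le_rfl (h.trans_eq (one_mul _).symm)

lemma apply_le_apply_zero (hq : HasPowerTail N q) (z : ℝ) : q z ≤ q 0 :=
  hq.apply_le_of_abs_le (by simp)

lemma apply_abs (hq : HasPowerTail N q) (x : ℝ) : q |x| = q x :=
  (hq.apply_le_of_abs_le (abs_abs x).ge).antisymm (hq.apply_le_of_abs_le (abs_abs x).le)

lemma measurable (hq : HasPowerTail N q) : Measurable q := by
  have hanti : Antitone fun t => q (max t 0) := fun s t hst => hq.apply_le_of_abs_le <| by
    simpa only [abs_of_nonneg (le_max_right _ (0 : ℝ))] using max_le_max_right 0 hst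
  have hcomp : q = (fun t => q (max t 0)) ∘ fun x => |x| := by
    ext x
    simp only [Function.comp_apply, max_eq_left (abs_nonneg x), hq.apply_abs]
  rw [hcomp]
  exact hanti.measurable.comp measurable_norm

lemma norm_apply_le (hq : HasPowerTail N q) (x : ℝ) : ‖q x‖ ≤ q 0 := by
  simpa only [Real.norm_eq_abs, abs_of_pos (hq.pos x)] using hq.apply_le_apply_zero x

lemma integrable (hq : HasPowerTail N q) (γ : Measure ℝ) [IsFiniteMeasure γ] : Integrable q γ :=
  .of_bound hq.measurable.aestronglyMeasurable (q 0) (ae_of_all _ hq.norm_apply_le)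

lemma exists_apply_add_le (hq : HasPowerTail N q) :
    ∃ K, ∀ y u, q (y + u) ≤ K * (1 + |u|) ^ N * q y := by
  have hK : 1 ≤ q 0 / q 1 := (one_le_div (hq.pos 1)).2 (hq.apply_le_apply_zero 1)
  refine ⟨q 0 / q 1, fun y u => ?_⟩
  have hu := abs_nonneg u
  have hy := hq.pos y
  have htri : |y| ≤ |y + u| + |u| := by simpa using abs_sub (y + u) u
  rw [mul_assoc]
  rcases le_total 1 |y + u| with h | h
  · calc q (y + u) ≤ (1 + |u|) ^ N * q y := hq.le_pow_mul (by linarith) (by nlinarith)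
      _ ≤ q 0 / q 1 * ((1 + |u|) ^ N * q y) := le_mul_of_one_le_left (by positivity) hK
  · calc q (y + u) ≤ q 0 := hq.apply_le_apply_zero _
      _ = q 0 / q 1 * q 1 := (div_mul_cancel₀ _ (hq.pos 1).ne').symm
      _ ≤ q 0 / q 1 * ((1 + |u|) ^ N * q y) := by
          gcongr
          exact hq.le_pow_mul (by linarith) (by rw [abs_one]; linarith)

lemma apply_add_le (hq : HasPowerTail N q) {y u : ℝ} (h : y + u ≠ 0) :
    q (y + u) ≤ (1 + |u| / |y + u|) ^ N * q y := by
  refine hq.le_pow_mul (le_add_of_nonneg_right (by positivity)) ?_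
  rw [add_mul, one_mul, div_mul_cancel₀ _ (abs_ne_zero.2 h)]
  simpa using abs_sub (y + u) u

lemma tendsto_apply_add_div (hq : HasPowerTail N q) (u : ℝ) :
    Tendsto (fun y => q (y + u) / q y) (cobounded ℝ) (𝓝 1) := by
  have habs : Tendsto (fun y : ℝ => |y|) (cobounded ℝ) atTop := tendsto_norm_cobounded_atTop
  have hshift : Tendsto (fun y : ℝ => y + u) (cobounded ℝ) (cobounded ℝ) :=
    tendsto_add_const_cobounded u
  have hfactor : Tendsto (fun y => (1 + |u| / |y|) ^ N) (cobounded ℝ) (𝓝 1) := by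
    simpa using ((habs.const_div_atTop |u|).const_add 1).pow N
  have hlower : Tendsto (fun y => ((1 + |u| / |y|) ^ N)⁻¹) (cobounded ℝ) (𝓝 1) := by
    simpa using hfactor.inv₀ one_ne_zero
  refine tendsto_of_tendsto_of_tendsto_of_le_of_le' hlower (hfactor.comp hshift) ?_ ?_
  · filter_upwards [eventually_ne_cobounded 0] with y hy
    rw [le_div_iff₀ (hq.pos y), inv_mul_le_iff₀ (by positivity)]
    simpa using hq.apply_add_le (y := y + u) (u := -u) (by simpa using hy)
  · filter_upwards [hshift.eventually (eventually_ne_cobounded 0)] with y hy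
    exact (div_le_iff₀ (hq.pos y)).2 (hq.apply_add_le hy)

lemma tendsto_integral_mul_apply_add_div (hq : HasPowerTail N q) {γ : Measure ℝ} {h : ℝ → ℝ}
    (hmeas : AEStronglyMeasurable h γ) (hint : Integrable (fun u => (1 + |u|) ^ N * |h u|) γ) :
    Tendsto (fun y => ∫ u, h u * (q (y + u) / q y) ∂γ) (cobounded ℝ) (𝓝 (∫ u, h u ∂γ)) := by
  have : (cobounded ℝ).IsCountablyGenerated := by rw [← comap_norm_atTop]; infer_instance
  obtain ⟨K, hK⟩ := hq.exists_apply_add_le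
  refine tendsto_integral_filter_of_dominated_convergence
    (fun u => K * ((1 + |u|) ^ N * |h u|)) (Eventually.of_forall fun y => ?_)
    (Eventually.of_forall fun y => ae_of_all _ fun u => ?_) (hint.const_mul K)
    (ae_of_all _ fun u => ?_)
  · exact hmeas.mul
      ((hq.measurable.comp (measurable_const_add y)).div_const _).aestronglyMeasurable
  · have hratio : q (y + u) / q y ≤ K * (1 + |u|) ^ N := (div_le_iff₀ (hq.pos y)).2 (hK y u)
    rw [Real.norm_eq_abs, abs_mul, abs_of_pos (div_pos (hq.pos _) (hq.pos _))]
    calc |h u| * (q (y + u) / q y) ≤ |h u| * (K * (1 + |u|) ^ N) := by gcongr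
      _ = K * ((1 + |u|) ^ N * |h u|) := by ring
  · simpa using (hq.tendsto_apply_add_div u).const_mul (h u)

theorem tendsto_integral_mul_div_integral (hq : HasPowerTail N q) {γ : Measure ℝ}
    [IsProbabilityMeasure γ] (hγ : MemLp id (N + 1 : ℕ) γ) :
    Tendsto (fun y => (∫ u, u * q (y + u) ∂γ) / ∫ u, q (y + u) ∂γ) (cobounded ℝ)
      (𝓝 (∫ u, u ∂γ)) := by
  have hmoment : Integrable (fun u : ℝ => (1 + |u|) ^ (N + 1)) γ := by
    refine ((memLp_const (1 : ℝ)).add hγ.norm).integrable_norm_pow'.congr (ae_of_all _ fun u => ?_)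
    simp only [Pi.add_apply, id]
    rw [Real.norm_of_nonneg (by positivity), Real.norm_eq_abs]
  have hzero : Integrable (fun u : ℝ => (1 + |u|) ^ N * |(1 : ℝ)|) γ :=
    hmoment.mono' (by fun_prop) <| ae_of_all _ fun u => by
      rw [abs_one, mul_one, Real.norm_of_nonneg (by positivity)]
      exact pow_le_pow_right₀ (by simp) N.le_succ
  have hone : Integrable (fun u : ℝ => (1 + |u|) ^ N * |u|) γ :=
    hmoment.mono' (by fun_prop) <| ae_of_all _ fun u => by
      rw [Real.norm_of_nonneg (by positivity), pow_succ]
      gcongr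
      exact le_add_of_nonneg_left zero_le_one
  have hlim := (hq.tendsto_integral_mul_apply_add_div (by fun_prop) hone).div
    (hq.tendsto_integral_mul_apply_add_div (by fun_prop) hzero) (by simp)
  simp only [integral_const, probReal_univ, one_smul, div_one] at hlim
  refine hlim.congr fun y => ?_
  simp only [Pi.div_apply, one_mul, ← mul_div_assoc, integral_div]
  exact div_div_div_cancel_right₀ (hq.pos y).ne' _ _

section Mixture

variable {A : Type*} [MeasurableSpace A] {ρ : Measure A} {P : A → ℝ → ℝ}

theorem integral [NeZero ρ] (hP : ∀ᵐ α ∂ρ, HasPowerTail N (P α))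
    (hint : ∀ x, Integrable (fun α => P α x) ρ) : HasPowerTail N fun x => ∫ α, P α x ∂ρ where
  pos x := integral_pos_of_ae_pos (hint x) (hP.mono fun _ hα => hα.pos x)
  le_pow_mul s y z hs hyz := by
    rw [← integral_const_mul]
    refine integral_mono_ae (hint z) ((hint y).const_mul _) ?_
    filter_upwards [hP] with α hα using hα.le_pow_mul hs hyz

theorem integral_integral_mul_swap [SFinite ρ] {γ : Measure ℝ} [SFinite γ]
    (hP : ∀ᵐ α ∂ρ, HasPowerTail N (P α)) (hint : Integrable (fun α => P α 0) ρ)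
    (hmeas : AEStronglyMeasurable (Function.uncurry P) (ρ.prod γ))
    {h : ℝ → ℝ} (hh : Integrable h γ) :
    ∫ α, ∫ x, h x * P α x ∂γ ∂ρ = ∫ x, h x * ∫ α, P α x ∂ρ ∂γ := by
  simp only [← integral_const_mul]
  have hae : ∀ᵐ z ∂ρ.prod γ, HasPowerTail N (P z.1) := Measure.quasiMeasurePreserving_fst.ae hP
  refine integral_integral_swap (((hint.mul_prod hh).norm).mono' ?_ ?_)
  · exact hh.aestronglyMeasurable.comp_snd.mul hmeas
  · filter_upwards [hae] with z hz
    rw [Function.uncurry_def, norm_mul, norm_mul, mul_comm,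
      Real.norm_of_nonneg (hz.pos _).le, Real.norm_of_nonneg (hz.pos _).le]
    gcongr
    exact hz.apply_le_apply_zero z.2

end Mixture

end HasPowerTail

section Gaussian

variable {v : ℝ≥0} {q : ℝ → ℝ}

lemma gaussianReal_tilted_mul (μ : ℝ) (hv : v ≠ 0) (t : ℝ) :
    (gaussianReal μ v).tilted (t * ·) = gaussianReal (μ + v * t) v := by
  have hmgf : ∫ x, Real.exp (t * x) ∂gaussianReal μ v = Real.exp (μ * t + v * t ^ 2 / 2) :=
    congrFun mgf_id_gaussianReal t
  have hv' : (v : ℝ) ≠ 0 := by exact_mod_cast hv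
  rw [Measure.tilted, hmgf, gaussianReal_of_var_ne_zero _ hv, gaussianReal_of_var_ne_zero _ hv,
    ← withDensity_mul _ (measurable_gaussianPDF _ _) (by fun_prop)]
  congr 1
  ext x
  rw [Pi.mul_apply, gaussianPDF, gaussianPDF,
    ← ENNReal.ofReal_mul (gaussianPDFReal_nonneg _ _ _), ← Real.exp_sub]
  simp only [gaussianPDFReal, mul_assoc, ← Real.exp_add]
  congr 3
  field_simp
  ring

/-- The marginal density at `y` of `Y ∼ N(β, v)` when `β` has the (possibly unnormalised) prior
density `q`. The Gaussian density is symmetric in `β` and `y`, so this is the mean of `q` under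
`N(y, v)`. -/
noncomputable def gaussianMarginal (v : ℝ≥0) (q : ℝ → ℝ) (y : ℝ) : ℝ :=
  ∫ x, q x ∂gaussianReal y v

/-- The posterior mean `E(β ∣ y)` in the model `Y ∼ N(β, v)` when `β` has the (possibly
unnormalised) prior density `q`. -/
noncomputable def gaussianPosteriorMean (v : ℝ≥0) (q : ℝ → ℝ) (y : ℝ) : ℝ :=
  (∫ x, x * q x ∂gaussianReal y v) / gaussianMarginal v q y

lemma integral_gaussianReal_shift (g : ℝ → ℝ) (y : ℝ) :
    ∫ x, g x ∂gaussianReal y v = ∫ u, g (y + u) ∂gaussianReal 0 v := by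
  have := (measurableEmbedding_addLeft y).integral_map (μ := gaussianReal 0 v) g
  rwa [gaussianReal_map_const_add, zero_add] at this

lemma gaussianPosteriorMean_sub {y : ℝ} (hint : Integrable q (gaussianReal y v))
    (hmean : Integrable (fun x => x * q x) (gaussianReal y v)) (hy : gaussianMarginal v q y ≠ 0) :
    gaussianPosteriorMean v q y - y =
      (∫ u, u * q (y + u) ∂gaussianReal 0 v) / ∫ u, q (y + u) ∂gaussianReal 0 v := by
  have hcentred : ∫ u, u * q (y + u) ∂gaussianReal 0 v =
      (∫ x, x * q x ∂gaussianReal y v) - y * gaussianMarginal v q y := by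
    have hshift := integral_gaussianReal_shift (v := v) (fun x => (x - y) * q x) y
    simp only [add_sub_cancel_left, sub_mul] at hshift
    rw [← hshift, integral_sub hmean (hint.const_mul y), integral_const_mul, gaussianMarginal]
  have hmarginal : ∫ u, q (y + u) ∂gaussianReal 0 v = gaussianMarginal v q y :=
    (integral_gaussianReal_shift q y).symm
  rw [hcentred, hmarginal, gaussianPosteriorMean, sub_div, mul_div_cancel_right₀ _ hy]

lemma integral_gaussianReal_eq_integral_tilt (hv : v ≠ 0) (g : ℝ → ℝ) (y : ℝ) :
    ∫ x, g x ∂gaussianReal y v =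
      Real.exp (-y ^ 2 / (2 * v)) * ∫ x, g x * Real.exp (y / v * x) ∂gaussianReal 0 v := by
  have hv' : (v : ℝ) ≠ 0 := by exact_mod_cast hv
  have htilt := gaussianReal_tilted_mul 0 hv (y / v)
  have hexp : -y ^ 2 / (2 * v) = -(v * (y / v) ^ 2 / 2) := by field_simp
  rw [zero_add, mul_div_cancel₀ y hv'] at htilt
  rw [← htilt, integral_tilted_mul_eq_mgf (X := fun x => x), mgf_fun_id_gaussianReal,
    ← integral_const_mul, hexp]
  congr with x
  simp only [zero_mul, zero_add, Real.exp_neg, smul_eq_mul]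
  ring

/-- The unnormalised posterior of `β` given `Y = 0`. The posterior given `Y = y` is its exponential
tilt by `y / v`, which makes the marginal a moment generating function of this measure. -/
noncomputable def gaussianPosteriorAtZero (v : ℝ≥0) (q : ℝ → ℝ) : Measure ℝ :=
  (gaussianReal 0 v).withDensity fun x => ENNReal.ofReal (q x)

lemma integral_gaussianPosteriorAtZero (hq : ∀ x, 0 ≤ q x)
    (hmeas : AEMeasurable q (gaussianReal 0 v)) (g : ℝ → ℝ) :
    ∫ x, g x ∂gaussianPosteriorAtZero v q = ∫ x, q x * g x ∂gaussianReal 0 v := by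
  rw [gaussianPosteriorAtZero, integral_withDensity_eq_integral_toReal_smul₀ hmeas.ennreal_ofReal
    (ae_of_all _ fun _ => ENNReal.ofReal_lt_top)]
  simp only [ENNReal.toReal_ofReal (hq _), smul_eq_mul]

lemma integrableExpSet_gaussianPosteriorAtZero (hv : v ≠ 0) (hq : ∀ x, 0 ≤ q x)
    (hint : ∀ y, Integrable q (gaussianReal y v)) :
    integrableExpSet id (gaussianPosteriorAtZero v q) = univ := by
  refine eq_univ_of_forall fun t => ?_
  have htilt := hint (0 + v * t)
  rw [← gaussianReal_tilted_mul 0 hv t,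
    integrable_tilted_iff (integrable_exp_mul_gaussianReal t)] at htilt
  refine (integrable_withDensity_iff_integrable_smul₀' (hint 0).aemeasurable.ennreal_ofReal
    (ae_of_all _ fun _ => ENNReal.ofReal_lt_top)).2 ?_
  simpa only [ENNReal.toReal_ofReal (hq _), smul_eq_mul, mul_comm, id] using htilt

lemma gaussianMarginal_eq_exp_mul_mgf (hv : v ≠ 0) (hq : ∀ x, 0 ≤ q x)
    (hmeas : AEMeasurable q (gaussianReal 0 v)) (y : ℝ) :
    gaussianMarginal v q y =
      Real.exp (-y ^ 2 / (2 * v)) * mgf id (gaussianPosteriorAtZero v q) (y / v) := by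
  rw [gaussianMarginal, integral_gaussianReal_eq_integral_tilt hv, mgf,
    integral_gaussianPosteriorAtZero hq hmeas]
  rfl

lemma hasDerivAt_gaussianMarginal (hv : v ≠ 0) (hq : ∀ x, 0 ≤ q x)
    (hint : ∀ y, Integrable q (gaussianReal y v)) (y : ℝ) :
    HasDerivAt (gaussianMarginal v q)
      (((∫ x, x * q x ∂gaussianReal y v) - y * gaussianMarginal v q y) / v) y := by
  have hmgf := gaussianMarginal_eq_exp_mul_mgf hv hq (hint 0).aemeasurable
  have hderiv_exp : HasDerivAt (fun z : ℝ => Real.exp (-z ^ 2 / (2 * v)))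
      (Real.exp (-y ^ 2 / (2 * v)) * (-(y / v))) y := by
    refine (((hasDerivAt_pow 2 y).fun_neg.div_const (2 * (v : ℝ))).exp).congr_deriv ?_
    field_simp
    ring
  have hderiv_mgf := (hasDerivAt_mgf (X := id) (μ := gaussianPosteriorAtZero v q) (t := y / v)
    (by simp [integrableExpSet_gaussianPosteriorAtZero hv hq hint])).comp y
      ((hasDerivAt_id' y).div_const (v : ℝ))
  have hmoment : ∫ x, x * q x ∂gaussianReal y v = Real.exp (-y ^ 2 / (2 * v)) *
      ∫ x, id x * Real.exp (y / v * id x) ∂gaussianPosteriorAtZero v q := by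
    rw [integral_gaussianReal_eq_integral_tilt hv,
      integral_gaussianPosteriorAtZero hq (hint 0).aemeasurable]
    congr with x
    simp only [id]
    ring
  rw [hmoment, hmgf, funext hmgf]
  refine (hderiv_exp.mul hderiv_mgf).congr_deriv ?_
  simp only [Function.comp_apply]
  ring

/-- Tweedie's formula. -/
theorem hasDerivAt_log_gaussianMarginal (hv : v ≠ 0) (hq : ∀ x, 0 ≤ q x)
    (hint : ∀ y, Integrable q (gaussianReal y v)) {y : ℝ} (hy : gaussianMarginal v q y ≠ 0) :
    HasDerivAt (fun z => Real.log (gaussianMarginal v q z))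
      ((gaussianPosteriorMean v q y - y) / v) y := by
  refine ((hasDerivAt_gaussianMarginal hv hq hint y).log hy).congr_deriv ?_
  rw [gaussianPosteriorMean]
  field_simp

end Gaussian

namespace HasPowerTail

variable {N : ℕ} {q : ℝ → ℝ} {v : ℝ≥0}

lemma gaussianMarginal_pos (hq : HasPowerTail N q) (y : ℝ) : 0 < gaussianMarginal v q y :=
  integral_pos_of_ae_pos (hq.integrable _) (ae_of_all _ hq.pos)

theorem tendsto_gaussianPosteriorMean_sub (hq : HasPowerTail N q) :
    Tendsto (fun y => gaussianPosteriorMean v q y - y) (cobounded ℝ) (𝓝 0) := by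
  have hlim := hq.tendsto_integral_mul_div_integral
    (memLp_id_gaussianReal' (μ := 0) (v := v) (N + 1 : ℕ) (by simp))
  rw [integral_id_gaussianReal] at hlim
  refine hlim.congr fun y => (gaussianPosteriorMean_sub (hq.integrable _) ?_
    (hq.gaussianMarginal_pos y).ne').symm
  exact ((memLp_id_gaussianReal 1).integrable (by simp)).mul_bdd (c := q 0)
    hq.measurable.aestronglyMeasurable (ae_of_all _ hq.norm_apply_le)

theorem tendsto_deriv_log_gaussianMarginal (hq : HasPowerTail N q) (hv : v ≠ 0) :
    Tendsto (deriv fun y => Real.log (gaussianMarginal v q y)) (cobounded ℝ) (𝓝 0) := by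
  have hlim := (hq.tendsto_gaussianPosteriorMean_sub (v := v)).div_const (v : ℝ)
  rw [zero_div] at hlim
  exact hlim.congr fun y => (hasDerivAt_log_gaussianMarginal hv (fun x => (hq.pos x).le)
    (fun _ => hq.integrable _) (hq.gaussianMarginal_pos y).ne').deriv.symm

end HasPowerTail

section Bridge

/-- The normalising constant of `bridgeDensity`. -/
noncomputable def bridgeConst (e f α : ℝ) : ℝ :=
  α / (2 ^ (1 / α + 1) * Real.Gamma (1 / α)) * (f ^ e / Real.Gamma e) * Real.Gamma (e + 1 / α)

/-- The prior density of `β` given the exponent `α`: the exponential power prior with its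
`Gamma(e, f)` precision `λ` integrated out. -/
noncomputable def bridgeDensity (e f α x : ℝ) : ℝ :=
  bridgeConst e f α / (|x| ^ α / 2 + f) ^ (e + 1 / α)

/-- The generalized bridge prior density: `bridgeDensity` mixed over `α ∼ Unif(k1, k2)`. -/
noncomputable def bridgePrior (e f k1 k2 x : ℝ) : ℝ :=
  ∫ α, bridgeDensity e f α x ∂volume[|Ioc k1 k2]

variable {e f α k1 k2 : ℝ} {N : ℕ}

lemma bridgeConst_pos (he : 0 < e) (hf : 0 < f) (hα : 0 < α) : 0 < bridgeConst e f α := by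
  have hΓe := Real.Gamma_pos_of_pos he
  have hΓα := Real.Gamma_pos_of_pos (one_div_pos.2 hα)
  have hΓ := Real.Gamma_pos_of_pos (add_pos he (one_div_pos.2 hα))
  exact mul_pos (mul_pos (div_pos hα (mul_pos (by positivity) hΓα))
    (div_pos (by positivity) hΓe)) hΓ

lemma half_abs_rpow_add_le {s y z : ℝ} (hf : 0 ≤ f) (hα : 0 ≤ α) (hs : 1 ≤ s)
    (h : |y| ≤ s * |z|) : |y| ^ α / 2 + f ≤ s ^ α * (|z| ^ α / 2 + f) := by
  have hpow : |y| ^ α ≤ s ^ α * |z| ^ α := by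
    rw [← Real.mul_rpow (by linarith) (abs_nonneg z)]
    gcongr
  have hconst : f ≤ s ^ α * f := le_mul_of_one_le_left hf (Real.one_le_rpow hs hα)
  linarith

theorem hasPowerTail_bridgeDensity (he : 0 < e) (hf : 0 < f) (hα : 0 < α)
    (hN : α * e + 1 ≤ N) : HasPowerTail N (bridgeDensity e f α) where
  pos x := div_pos (bridgeConst_pos he hf hα) (by positivity)
  le_pow_mul s y z hs hyz := by
    have hconst := bridgeConst_pos he hf hα
    have hexp : α * (e + 1 / α) ≤ N := by rwa [mul_add, mul_one_div_cancel hα.ne']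
    have hden : (|y| ^ α / 2 + f) ^ (e + 1 / α) ≤ s ^ N * (|z| ^ α / 2 + f) ^ (e + 1 / α) := by
      calc (|y| ^ α / 2 + f) ^ (e + 1 / α)
          ≤ (s ^ α * (|z| ^ α / 2 + f)) ^ (e + 1 / α) := by
            gcongr
            exact half_abs_rpow_add_le hf.le hα.le hs hyz
        _ = s ^ (α * (e + 1 / α)) * (|z| ^ α / 2 + f) ^ (e + 1 / α) := by
            rw [Real.mul_rpow (by positivity) (by positivity), Real.rpow_mul (by positivity)]
        _ ≤ s ^ N * (|z| ^ α / 2 + f) ^ (e + 1 / α) := by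
            gcongr
            exact_mod_cast Real.rpow_le_rpow_of_exponent_le hs hexp
    rw [bridgeDensity, bridgeDensity, ← mul_div_assoc,
      div_le_div_iff₀ (by positivity) (by positivity), mul_comm (s ^ N), mul_assoc]
    gcongr

lemma continuousOn_bridgeConst (he : 0 < e) : ContinuousOn (bridgeConst e f) (Ioi 0) := by
  have hinv : ContinuousOn (fun α : ℝ => 1 / α) (Ioi 0) :=
    continuousOn_const.div continuousOn_id fun α hα => (mem_Ioi.1 hα).ne'
  have hΓα : ContinuousOn (fun α : ℝ => Real.Gamma (1 / α)) (Ioi 0) :=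
    Real.differentiableOn_Gamma_Ioi.continuousOn.comp hinv fun α hα =>
      one_div_pos.2 (mem_Ioi.1 hα)
  have hΓ : ContinuousOn (fun α : ℝ => Real.Gamma (e + 1 / α)) (Ioi 0) :=
    Real.differentiableOn_Gamma_Ioi.continuousOn.comp (continuousOn_const.add hinv)
      fun α hα => add_pos he (one_div_pos.2 (mem_Ioi.1 hα))
  have htwo : ContinuousOn (fun α : ℝ => (2 : ℝ) ^ (1 / α + 1)) (Ioi 0) :=
    continuousOn_const.rpow (hinv.add continuousOn_const) fun _ _ => .inl two_ne_zero
  refine ((continuousOn_id.div (htwo.mul hΓα) fun α hα => ?_).mul continuousOn_const).mul hΓ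
  exact (mul_pos (by positivity) (Real.Gamma_pos_of_pos (one_div_pos.2 hα))).ne'

lemma continuousOn_uncurry_bridgeDensity (he : 0 < e) (hf : 0 < f) :
    ContinuousOn (Function.uncurry (bridgeDensity e f)) (Ioi 0 ×ˢ univ) := by
  have hbase (z : ℝ × ℝ) : 0 < |z.2| ^ z.1 / 2 + f := by positivity
  have hpow : ContinuousOn (fun z : ℝ × ℝ => |z.2| ^ z.1) (Ioi 0 ×ˢ univ) :=
    continuousOn_snd.abs.rpow continuousOn_fst fun z hz => .inr hz.1
  have hexp : ContinuousOn (fun z : ℝ × ℝ => e + 1 / z.1) (Ioi 0 ×ˢ univ) :=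
    continuousOn_const.add (continuousOn_const.div continuousOn_fst fun z hz => hz.1.ne')
  exact ((continuousOn_bridgeConst he).comp continuousOn_fst fun z hz => hz.1).div
    (((hpow.div_const 2).add continuousOn_const).rpow hexp fun z _ => .inl (hbase z).ne')
    fun z _ => (Real.rpow_pos_of_pos (hbase z) _).ne'

lemma ae_hasPowerTail_bridgeDensity (he : 0 < e) (hf : 0 < f) (hk1 : 0 < k1)
    (hN : k2 * e + 1 ≤ N) :
    ∀ᵐ α ∂volume[|Ioc k1 k2], HasPowerTail N (bridgeDensity e f α) := by
  filter_upwards [ae_cond_mem measurableSet_Ioc] with α hα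
  refine hasPowerTail_bridgeDensity he hf (hk1.trans hα.1) (le_trans ?_ hN)
  gcongr
  exact hα.2

lemma integrable_bridgeDensity (he : 0 < e) (hf : 0 < f) (hk1 : 0 < k1) (hk : k1 < k2) (x : ℝ) :
    Integrable (fun α => bridgeDensity e f α x) volume[|Ioc k1 k2] := by
  have hcont : ContinuousOn (fun α => bridgeDensity e f α x) (Icc k1 k2) :=
    (continuousOn_uncurry_bridgeDensity he hf).comp (continuousOn_id.prodMk continuousOn_const)
      fun α (hα : α ∈ Icc k1 k2) => ⟨hk1.trans_le hα.1, mem_univ x⟩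
  exact (hcont.integrableOn_Icc.mono_set Ioc_subset_Icc_self).smul_measure (by simpa using hk)

lemma aestronglyMeasurable_uncurry_bridgeDensity (he : 0 < e) (hf : 0 < f) (hk1 : 0 < k1)
    (γ : Measure ℝ) [SFinite γ] :
    AEStronglyMeasurable (Function.uncurry (bridgeDensity e f)) ((volume[|Ioc k1 k2]).prod γ) := by
  have hmem : ∀ᵐ z ∂(volume[|Ioc k1 k2]).prod γ, z ∈ Ioi (0 : ℝ) ×ˢ (univ : Set ℝ) := by
    filter_upwards [Measure.quasiMeasurePreserving_fst.ae (ae_cond_mem measurableSet_Ioc)]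
      with z hz using ⟨hk1.trans hz.1, mem_univ _⟩
  rw [← Measure.restrict_eq_self_of_ae_mem hmem]
  exact (continuousOn_uncurry_bridgeDensity he hf).aestronglyMeasurable
    (measurableSet_Ioi.prod .univ)

theorem hasPowerTail_bridgePrior (he : 0 < e) (hf : 0 < f) (hk1 : 0 < k1) (hk : k1 < k2)
    (hN : k2 * e + 1 ≤ N) : HasPowerTail N (bridgePrior e f k1 k2) := by
  have := isProbabilityMeasure_cond_Ioc hk
  exact .integral (ae_hasPowerTail_bridgeDensity he hf hk1 hN)
    (integrable_bridgeDensity he hf hk1 hk)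

theorem integral_mul_bridgePrior_gaussianReal (he : 0 < e) (hf : 0 < f) (hk1 : 0 < k1)
    (hk : k1 < k2) {h : ℝ → ℝ} {y : ℝ} {v : ℝ≥0} (hv : v ≠ 0)
    (hh : Integrable h (gaussianReal y v)) :
    ∫ β, h β * bridgePrior e f k1 k2 β ∂gaussianReal y v =
      1 / (k2 - k1) *
        ∫ α in k1..k2, ∫ β, h β * (gaussianPDFReal y v β * bridgeDensity e f α β) := by
  have := isProbabilityMeasure_cond_Ioc hk
  obtain ⟨N, hN⟩ := exists_nat_ge (k2 * e + 1)
  have hswap := HasPowerTail.integral_integral_mul_swap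
    (ae_hasPowerTail_bridgeDensity he hf hk1 hN) (integrable_bridgeDensity he hf hk1 hk 0)
    (aestronglyMeasurable_uncurry_bridgeDensity he hf hk1 _) hh
  simp only [bridgePrior]
  rw [← hswap, integral_cond_Ioc hk.le]
  simp only [integral_gaussianReal_eq_integral_smul hv, smul_eq_mul, mul_left_comm (h _)]

lemma gaussianPDFReal_one_mul_bridgeDensity (y β : ℝ) :
    gaussianPDFReal y 1 β * bridgeDensity e f α β =
      Real.exp (-(β - y) ^ 2 / 2) / √(2 * Real.pi) *
        (α / (2 ^ (1 / α + 1) * Real.Gamma (1 / α))) * (f ^ e / Real.Gamma e) *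
        (Real.Gamma (e + 1 / α) / (|β| ^ α / 2 + f) ^ (e + 1 / α)) := by
  simp only [gaussianPDFReal, bridgeDensity, bridgeConst, NNReal.coe_one, mul_one]
  ring

end Bridge

theorem gbr_tail_robustness_general (e f k1 k2 : ℝ) (he : 0 < e) (hf : 0 < f)
    (hk1 : 0 < k1) (hk : k1 < k2) (m post : ℝ → ℝ)
    (hm : ∀ y, m y = 1 / (k2 - k1) * ∫ α in k1..k2, ∫ β : ℝ,
        Real.exp (-(β - y) ^ 2 / 2) / √(2 * Real.pi) *
          (α / (2 ^ (1 / α + 1) * Real.Gamma (1 / α))) *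
          (f ^ e / Real.Gamma e) *
          (Real.Gamma (e + 1 / α) / (|β| ^ α / 2 + f) ^ (e + 1 / α)))
    (hpost : ∀ y, post y = (1 / (k2 - k1) * ∫ α in k1..k2, ∫ β : ℝ,
        β * (Real.exp (-(β - y) ^ 2 / 2) / √(2 * Real.pi) *
          (α / (2 ^ (1 / α + 1) * Real.Gamma (1 / α))) *
          (f ^ e / Real.Gamma e) *
          (Real.Gamma (e + 1 / α) / (|β| ^ α / 2 + f) ^ (e + 1 / α)))) / m y) :
    Tendsto (fun y => deriv (fun z => Real.log (m z)) y) (cobounded ℝ) (𝓝 0) ∧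
      Tendsto (fun y => |y - post y|) (cobounded ℝ) (𝓝 0) := by
  obtain ⟨N, hN⟩ := exists_nat_ge (k2 * e + 1)
  have hq := hasPowerTail_bridgePrior he hf hk1 hk hN
  simp only [← gaussianPDFReal_one_mul_bridgeDensity] at hm hpost
  obtain rfl : m = gaussianMarginal 1 (bridgePrior e f k1 k2) := funext fun y => by
    simpa only [one_mul, ← hm, gaussianMarginal] using
      (integral_mul_bridgePrior_gaussianReal he hf hk1 hk one_ne_zero
        (integrable_const (μ := gaussianReal y 1) 1)).symm
  obtain rfl : post = gaussianPosteriorMean 1 (bridgePrior e f k1 k2) := funext fun y => by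
    rw [hpost, gaussianPosteriorMean, integral_mul_bridgePrior_gaussianReal (h := fun x => x)
      he hf hk1 hk one_ne_zero ((memLp_id_gaussianReal 1).integrable (by simp))]
  exact ⟨hq.tendsto_deriv_log_gaussianMarginal one_ne_zero, by
    simpa only [abs_sub_comm, abs_zero] using hq.tendsto_gaussianPosteriorMean_sub.abs⟩

theorem gbr_tail_robustness (e f k1 k2 : ℝ) (he : 0 < e) (hf : 0 < f)
    (hk1 : 0 < k1) (hk1' : k1 ≤ 1) (hk2 : 2 ≤ k2) (hk2' : k2 ≤ 4)
    (m post : ℝ → ℝ)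
    (hm : ∀ y, m y = (1/(k2 - k1)) * ∫ α in k1..k2, ∫ β : ℝ,
        Real.exp (-(β - y)^2/2) / Real.sqrt (2 * Real.pi) *
          (α / (2 ^ (1/α + 1) * Real.Gamma (1/α))) *
          (f ^ e / Real.Gamma e) *
          (Real.Gamma (e + 1/α) / (|β| ^ α / 2 + f) ^ (e + 1/α)))
    (hpost : ∀ y, post y = ((1/(k2 - k1)) * ∫ α in k1..k2, ∫ β : ℝ,
        β * (Real.exp (-(β - y)^2/2) / Real.sqrt (2 * Real.pi) *
          (α / (2 ^ (1/α + 1) * Real.Gamma (1/α))) *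
          (f ^ e / Real.Gamma e) *
          (Real.Gamma (e + 1/α) / (|β| ^ α / 2 + f) ^ (e + 1/α)))) / m y) :
    (Tendsto (fun y => deriv (fun z => Real.log (m z)) y) atTop (nhds 0) ∧
     Tendsto (fun y => deriv (fun z => Real.log (m z)) y) atBot (nhds 0)) ∧
    (Tendsto (fun y => |y - post y|) atTop (nhds 0) ∧
     Tendsto (fun y => |y - post y|) atBot (nhds 0)) := by
  obtain ⟨hscore, hmean⟩ := gbr_tail_robustness_general e f k1 k2 he hf hk1 (by linarith) m post
    hm hpost
  exact ⟨⟨hscore.mono_left IsOrderBornology.atTop_le_cobounded,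
    hscore.mono_left IsOrderBornology.atBot_le_cobounded⟩,
    hmean.mono_left IsOrderBornology.atTop_le_cobounded,
    hmean.mono_left IsOrderBornology.atBot_le_cobounded⟩
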